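/- Let E : P_{μ₀}(ℝ^d) → ℝ ∪ {∞} be proper, coercive, lower semicontinuous, and λ-convex along generalized geodesics with λ ≥ 0, assume E attains its minimum at μ̄, and for τ > 0 set λ_τ := λ/(1+λτ). Then for all μ in the W₂-closure of D(E) the Talagrand inequality holds: E_τ(μ) − E_τ(μ̄) ≥ (λ_τ/2) W₂²(μ, μ̄). -/

import Mathlib

/-! The minimum value `m = F μbar` is finite, and `MY μbar ≤ m`. It therefore suffices to show
`m + (lam/(1+lam τ))/2 · W₂²(μ,μbar) ≤ W₂²(μ,ν)/(2τ) + F ν` for every `ν ∈ Pfin μ₀`.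

* `talagrand_of_min`: convexity along a generalized geodesic from `ν` to `μbar`, together with
  minimality of `μbar` along that curve and the limit `α → 1`, gives
  `(lam/2) W₂²(ν,μbar) ≤ F ν - m`. The geodesic is based at `μ₀`, so that the plan which defines it
  also couples `μ₀` to the interpolating curve and shows that the curve stays in `Pfin μ₀`.
* `W2_sq_le`: `W₂²(μ,μbar) ≤ (1+s) W₂²(ν,μ) + (1+1/s) W₂²(ν,μbar)` for `s > 0`. The plan needed
  to compare the three measures is the one supplied by the convexity hypothesis with base `ν`,
  so no gluing of plans is required.

The weight `s = 1/(lam τ)` combines the two into the claim. -/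

open MeasureTheory Filter ENNReal

noncomputable section

/-- Euclidean space `ℝ^d`. -/
abbrev Euc (d : ℕ) := EuclideanSpace ℝ (Fin d)

/-- The squared 2-Wasserstein distance, as an extended nonnegative real:
the infimum over couplings `γ` (Borel probability measures on `ℝ^d × ℝ^d`
with first marginal `μ` and second marginal `ν`) of `∫ |x-y|² dγ`. -/
noncomputable def W2sq {d : ℕ} (μ ν : Measure (Euc d)) : ℝ≥0∞ :=
  ⨅ (γ : Measure (Euc d × Euc d)) (_ : γ.map Prod.fst = μ ∧ γ.map Prod.snd = ν),
    ∫⁻ q, ENNReal.ofReal (‖q.1 - q.2‖ ^ 2) ∂γ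

/-- The 2-Wasserstein distance (a real number; degenerate when `W2sq = ∞`). -/
noncomputable def W2 {d : ℕ} (μ ν : Measure (Euc d)) : ℝ :=
  Real.sqrt (W2sq μ ν).toReal

/-- `γ` is an optimal transport plan from `μ` to `ν`. -/
def IsOptimalPlan {d : ℕ} (μ ν : Measure (Euc d)) (γ : Measure (Euc d × Euc d)) : Prop :=
  γ.map Prod.fst = μ ∧ γ.map Prod.snd = ν ∧
    ∫⁻ q, ENNReal.ofReal (‖q.1 - q.2‖ ^ 2) ∂γ = W2sq μ ν

/-- `P_{μ₀}(ℝ^d)`: Borel probability measures at finite `W₂`-distance from `μ₀`. -/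
def Pfin {d : ℕ} (μ₀ : Measure (Euc d)) : Set (Measure (Euc d)) :=
  {μ | IsProbabilityMeasure μ ∧ W2sq μ₀ μ ≠ ⊤}

/-- `E` is proper: its domain inside `P_{μ₀}` is nonempty (and `E` never takes the value `-∞`,
i.e. it maps into `ℝ ∪ {∞}`). -/
def ProperFn {d : ℕ} (μ₀ : Measure (Euc d)) (F : Measure (Euc d) → EReal) : Prop :=
  (∀ ρ, F ρ ≠ ⊥) ∧ ∃ ρ ∈ Pfin μ₀, F ρ ≠ ⊤

/-- The domain `D(E)` of `E`. -/
def Dom {d : ℕ} (μ₀ : Measure (Euc d)) (F : Measure (Euc d) → EReal) : Set (Measure (Euc d)) :=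
  {μ ∈ Pfin μ₀ | F μ ≠ ⊤}

/-- `E` is coercive: for some `τ₀ > 0`,
`inf_ν { W₂²(μ₀,ν)/(2τ₀) + E(ν) } > -∞`. -/
def CoerciveFn {d : ℕ} (μ₀ : Measure (Euc d)) (F : Measure (Euc d) → EReal) : Prop :=
  ∃ τ₀ : ℝ, 0 < τ₀ ∧
    ⊥ < ⨅ ν ∈ Pfin μ₀, (((W2 μ₀ ν) ^ 2 / (2 * τ₀) : ℝ) : EReal) + F ν

/-- `E` is sequentially lower semicontinuous with respect to `W₂`-convergence. -/
def W2LSC {d : ℕ} (μ₀ : Measure (Euc d)) (F : Measure (Euc d) → EReal) : Prop :=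
  ∀ (s : ℕ → Measure (Euc d)) (μ : Measure (Euc d)),
    (∀ n, s n ∈ Pfin μ₀) → μ ∈ Pfin μ₀ →
    Tendsto (fun n => W2 (s n) μ) atTop (nhds 0) →
    F μ ≤ liminf (fun n => F (s n)) atTop

/-- `E` is `λ`-convex along generalized geodesics: for all `μ₁, μ₂, μ₃ ∈ P_{μ₀}` there
is a 3-plan whose (1,2)- and (1,3)-marginals are optimal, along whose induced interpolating
curve the `λ`-convexity inequality (with the full transport cost `∫|x₂-x₃|² d𝛍`) holds. -/
def GenGeoConvex {d : ℕ} (μ₀ : Measure (Euc d)) (lam : ℝ)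
    (F : Measure (Euc d) → EReal) : Prop :=
  ∀ μ₁ ∈ Pfin μ₀, ∀ μ₂ ∈ Pfin μ₀, ∀ μ₃ ∈ Pfin μ₀,
    ∃ pl : Measure (Euc d × Euc d × Euc d),
      IsOptimalPlan μ₁ μ₂ (pl.map (fun q => (q.1, q.2.1))) ∧
      IsOptimalPlan μ₁ μ₃ (pl.map (fun q => (q.1, q.2.2))) ∧
      ∀ α ∈ Set.Icc (0:ℝ) 1,
        F (pl.map (fun q => (1 - α) • q.2.1 + α • q.2.2)) ≤
          ((1 - α : ℝ) : EReal) * F μ₂ + (α : EReal) * F μ₃ -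
            ((α * (1 - α) * (lam / 2) *
              (∫⁻ q, ENNReal.ofReal (‖q.2.1 - q.2.2‖ ^ 2) ∂pl).toReal : ℝ) : EReal)

/-- The `W₂`-closure (within `P_{μ₀}`) of a set of measures. -/
def W2Closure {d : ℕ} (μ₀ : Measure (Euc d)) (S : Set (Measure (Euc d))) :
    Set (Measure (Euc d)) :=
  {μ ∈ Pfin μ₀ | ∃ s : ℕ → Measure (Euc d), (∀ n, s n ∈ S) ∧
    Tendsto (fun n => W2 (s n) μ) atTop (nhds 0)}

/-- The Moreau–Yosida regularization `E_τ`. -/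
noncomputable def MY {d : ℕ} (μ₀ : Measure (Euc d)) (F : Measure (Euc d) → EReal)
    (τ : ℝ) (μ : Measure (Euc d)) : EReal :=
  ⨅ ν ∈ Pfin μ₀, (((W2 μ ν) ^ 2 / (2 * τ) : ℝ) : EReal) + F ν

/-- `ν` is a proximal point of `μ` for `E` with step `τ`: it minimizes
`ρ ↦ W₂²(μ,ρ)/(2τ) + E(ρ)` over `P_{μ₀}`. -/
def IsProximal {d : ℕ} (μ₀ : Measure (Euc d)) (F : Measure (Euc d) → EReal)
    (τ : ℝ) (μ ν : Measure (Euc d)) : Prop :=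
  ν ∈ Pfin μ₀ ∧ ∀ ρ ∈ Pfin μ₀,
    (((W2 μ ν) ^ 2 / (2 * τ) : ℝ) : EReal) + F ν ≤
      (((W2 μ ρ) ^ 2 / (2 * τ) : ℝ) : EReal) + F ρ

/-- The positive part of an extended real, as an element of `[0,∞]`. -/
noncomputable def ERealPos (x : EReal) : ℝ≥0∞ :=
  if x = ⊤ then ⊤ else ENNReal.ofReal x.toReal

/-- The filter of `W₂`-punctured neighborhoods of `μ` within `P_{μ₀}`. -/
def W2nhdsWithin {d : ℕ} (μ₀ μ : Measure (Euc d)) : Filter (Measure (Euc d)) :=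
  ⨅ ε ∈ Set.Ioi (0:ℝ), Filter.principal {ν | ν ∈ Pfin μ₀ ∧ ν ≠ μ ∧ W2 μ ν < ε}

/-- The metric slope `|∇_W F|(μ) = limsup_{ν → μ} (F(μ)-F(ν))⁺ / W₂(μ,ν)`,
valued in `[0,∞]`. -/
noncomputable def slopeW {d : ℕ} (μ₀ : Measure (Euc d)) (F : Measure (Euc d) → EReal)
    (μ : Measure (Euc d)) : ℝ≥0∞ :=
  Filter.limsup (fun ν => ERealPos (F μ - F ν) / ENNReal.ofReal (W2 μ ν))
    (W2nhdsWithin μ₀ μ)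

/-- `Λ_τ(μ,ν) = W₂²(μ,ν) + (τ²/2)|∇_W E|(μ)² + (τ²/2)|∇_W E|(ν)²`, valued in `[0,∞]`. -/
noncomputable def LamT {d : ℕ} (μ₀ : Measure (Euc d)) (F : Measure (Euc d) → EReal)
    (τ : ℝ) (μ ν : Measure (Euc d)) : ℝ≥0∞ :=
  W2sq μ ν + ENNReal.ofReal (τ ^ 2 / 2) * (slopeW μ₀ F μ) ^ 2
    + ENNReal.ofReal (τ ^ 2 / 2) * (slopeW μ₀ F ν) ^ 2

section Transport

variable {d : ℕ}

lemma W2sq_le_of_plan {Ω : Type*} [MeasurableSpace Ω] (pl : Measure Ω) {f g : Ω → Euc d}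
    (hf : Measurable f) (hg : Measurable g) :
    W2sq (pl.map f) (pl.map g) ≤ ∫⁻ q, ENNReal.ofReal (‖f q - g q‖ ^ 2) ∂pl := by
  refine (iInf₂_le (pl.map (fun q => (f q, g q))) ⟨?_, ?_⟩).trans_eq ?_
  · rw [lintegral_map (by fun_prop) (hf.prodMk hg)]
  · rw [Measure.map_map measurable_fst (hf.prodMk hg)]; rfl
  · rw [Measure.map_map measurable_snd (hf.prodMk hg)]; rfl

lemma W2sq_comm_le (μ ν : Measure (Euc d)) : W2sq μ ν ≤ W2sq ν μ := by
  refine le_iInf₂ fun γ hγ => ?_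
  obtain ⟨rfl, rfl⟩ := hγ
  refine (W2sq_le_of_plan γ measurable_snd measurable_fst).trans_eq ?_
  simp only [norm_sub_rev]

lemma W2sq_comm (μ ν : Measure (Euc d)) : W2sq μ ν = W2sq ν μ :=
  le_antisymm (W2sq_comm_le _ _) (W2sq_comm_le _ _)

lemma W2sq_self (μ : Measure (Euc d)) : W2sq μ μ = 0 := by
  have h := W2sq_le_of_plan μ (f := id) (g := id) measurable_id measurable_id
  simpa using h

lemma W2_sq (μ ν : Measure (Euc d)) : W2 μ ν ^ 2 = (W2sq μ ν).toReal :=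
  Real.sq_sqrt ENNReal.toReal_nonneg

/-- The weighted inequality `‖a + b‖² ≤ (1+s)‖a‖² + (1+1/s)‖b‖²`, for `a = y - x`, `b = x - z`. -/
lemma norm_sub_sq_le_weighted (x y z : Euc d) {s : ℝ} (hs : 0 < s) :
    ‖y - z‖ ^ 2 ≤ (1 + s) * ‖x - y‖ ^ 2 + (1 + s⁻¹) * ‖x - z‖ ^ 2 := by
  have h1 : ‖y - z‖ ≤ ‖x - y‖ + ‖x - z‖ := by
    have := norm_sub_le_norm_sub_add_norm_sub y x z
    rwa [norm_sub_rev y x] at this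
  have h2 : ‖y - z‖ ^ 2 ≤ (‖x - y‖ + ‖x - z‖) ^ 2 := by gcongr
  have h3 : (1 + s) * ‖x - y‖ ^ 2 + (1 + s⁻¹) * ‖x - z‖ ^ 2 - (‖x - y‖ + ‖x - z‖) ^ 2
      = s⁻¹ * (s * ‖x - y‖ - ‖x - z‖) ^ 2 := by field_simp; ring
  have h4 : 0 ≤ s⁻¹ * (s * ‖x - y‖ - ‖x - z‖) ^ 2 := by positivity
  linarith

/-- In a 3-plan with optimal (1,2)- and (1,3)-marginals, the (2,3)-cost is controlled by the
two optimal costs. -/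
lemma plan_cost_le {μ₁ μ₂ μ₃ : Measure (Euc d)} {pl : Measure (Euc d × Euc d × Euc d)}
    (h2 : IsOptimalPlan μ₁ μ₂ (pl.map (fun q => (q.1, q.2.1))))
    (h3 : IsOptimalPlan μ₁ μ₃ (pl.map (fun q => (q.1, q.2.2)))) {s : ℝ} (hs : 0 < s) :
    ∫⁻ q, ENNReal.ofReal (‖q.2.1 - q.2.2‖ ^ 2) ∂pl ≤
      ENNReal.ofReal (1 + s) * W2sq μ₁ μ₂ + ENNReal.ofReal (1 + s⁻¹) * W2sq μ₁ μ₃ := by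
  have e2 := h2.2.2
  have e3 := h3.2.2
  rw [lintegral_map (by fun_prop) (by fun_prop)] at e2 e3
  rw [← e2, ← e3, ← lintegral_const_mul _ (by fun_prop), ← lintegral_const_mul _ (by fun_prop),
    ← lintegral_add_left (by fun_prop)]
  refine lintegral_mono fun q => ?_
  rw [← ENNReal.ofReal_mul (by positivity), ← ENNReal.ofReal_mul (by positivity),
    ← ENNReal.ofReal_add (by positivity) (by positivity)]
  exact ENNReal.ofReal_le_ofReal (norm_sub_sq_le_weighted _ _ _ hs)

lemma W2sq_le_plan_cost {μ₁ μ₂ μ₃ : Measure (Euc d)} {pl : Measure (Euc d × Euc d × Euc d)}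
    (h2 : IsOptimalPlan μ₁ μ₂ (pl.map (fun q => (q.1, q.2.1))))
    (h3 : IsOptimalPlan μ₁ μ₃ (pl.map (fun q => (q.1, q.2.2)))) :
    W2sq μ₂ μ₃ ≤ ∫⁻ q, ENNReal.ofReal (‖q.2.1 - q.2.2‖ ^ 2) ∂pl := by
  have e2 := h2.2.1
  have e3 := h3.2.1
  rw [Measure.map_map (by fun_prop) (by fun_prop)] at e2 e3
  rw [← e2, ← e3]
  exact W2sq_le_of_plan pl (by fun_prop) (by fun_prop)

lemma W2sq_ne_top {μ₀ : Measure (Euc d)} {F : Measure (Euc d) → EReal} {lam : ℝ}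
    (hμ₀ : IsProbabilityMeasure μ₀) (hconv : GenGeoConvex μ₀ lam F) {μ ν : Measure (Euc d)}
    (hμ : μ ∈ Pfin μ₀) (hν : ν ∈ Pfin μ₀) : W2sq μ ν ≠ ⊤ := by
  have h0 : μ₀ ∈ Pfin μ₀ := ⟨hμ₀, by simp [W2sq_self]⟩
  obtain ⟨pl, h2, h3, -⟩ := hconv μ₀ h0 μ hμ ν hν
  refine ne_top_of_le_ne_top ?_
    ((W2sq_le_plan_cost h2 h3).trans (plan_cost_le h2 h3 one_pos))
  exact ENNReal.add_ne_top.2 ⟨ENNReal.mul_ne_top ENNReal.ofReal_ne_top hμ.2,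
    ENNReal.mul_ne_top ENNReal.ofReal_ne_top hν.2⟩

/-- A weighted triangle inequality for `W₂`, with the intermediate measure `ν`. -/
lemma W2_sq_le {μ₀ : Measure (Euc d)} {F : Measure (Euc d) → EReal} {lam : ℝ}
    (hμ₀ : IsProbabilityMeasure μ₀) (hconv : GenGeoConvex μ₀ lam F) {μ ν ρ : Measure (Euc d)}
    (hμ : μ ∈ Pfin μ₀) (hν : ν ∈ Pfin μ₀) (hρ : ρ ∈ Pfin μ₀) {s : ℝ} (hs : 0 < s) :
    W2 μ ρ ^ 2 ≤ (1 + s) * W2 ν μ ^ 2 + (1 + s⁻¹) * W2 ν ρ ^ 2 := by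
  obtain ⟨pl, h2, h3, -⟩ := hconv ν hν μ hμ ρ hρ
  have h := (W2sq_le_plan_cost h2 h3).trans (plan_cost_le h2 h3 hs)
  have t2 := ENNReal.mul_ne_top (ENNReal.ofReal_ne_top (r := 1 + s))
    (W2sq_ne_top hμ₀ hconv hν hμ)
  have t3 := ENNReal.mul_ne_top (ENNReal.ofReal_ne_top (r := 1 + s⁻¹))
    (W2sq_ne_top hμ₀ hconv hν hρ)
  have h' := ENNReal.toReal_mono (ENNReal.add_ne_top.2 ⟨t2, t3⟩) h
  rwa [ENNReal.toReal_add t2 t3, ENNReal.toReal_mul, ENNReal.toReal_mul,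
    ENNReal.toReal_ofReal (by positivity), ENNReal.toReal_ofReal (by positivity),
    ← W2_sq, ← W2_sq, ← W2_sq] at h'

/-- The curve induced by a 3-plan based at `μ₀` stays in `Pfin μ₀`: the plan couples `μ₀` with
the interpolated measure, and the cost is at most a multiple of the endpoint costs. -/
lemma interp_mem_Pfin {μ₀ μ₂ μ₃ : Measure (Euc d)} (hμ₀ : IsProbabilityMeasure μ₀)
    (hμ₂ : μ₂ ∈ Pfin μ₀) (hμ₃ : μ₃ ∈ Pfin μ₀) {pl : Measure (Euc d × Euc d × Euc d)}
    (h2 : IsOptimalPlan μ₀ μ₂ (pl.map (fun q => (q.1, q.2.1))))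
    (h3 : IsOptimalPlan μ₀ μ₃ (pl.map (fun q => (q.1, q.2.2)))) {α : ℝ}
    (hα : α ∈ Set.Icc (0 : ℝ) 1) :
    pl.map (fun q => (1 - α) • q.2.1 + α • q.2.2) ∈ Pfin μ₀ := by
  have e1 := h2.1
  rw [Measure.map_map (by fun_prop) (by fun_prop)] at e1
  have hpl : IsProbabilityMeasure pl := by
    rw [← e1] at hμ₀
    exact Measure.isProbabilityMeasure_of_map (μ := pl)
      (f := Prod.fst ∘ fun q : Euc d × Euc d × Euc d => (q.1, q.2.1))
  refine ⟨Measure.isProbabilityMeasure_map (by fun_prop), ?_⟩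
  have e2 := h2.2.2
  have e3 := h3.2.2
  rw [lintegral_map (by fun_prop) (by fun_prop)] at e2 e3
  have hle : W2sq μ₀ (pl.map (fun q => (1 - α) • q.2.1 + α • q.2.2)) ≤
      ENNReal.ofReal 2 * W2sq μ₀ μ₂ + ENNReal.ofReal 2 * W2sq μ₀ μ₃ := by
    have h := W2sq_le_of_plan pl
      (f := Prod.fst ∘ fun q : Euc d × Euc d × Euc d => (q.1, q.2.1))
      (g := fun q => (1 - α) • q.2.1 + α • q.2.2) (by fun_prop) (by fun_prop)
    rw [e1] at h
    refine h.trans ?_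
    rw [← e2, ← e3, ← lintegral_const_mul _ (by fun_prop), ← lintegral_const_mul _ (by fun_prop),
      ← lintegral_add_left (by fun_prop)]
    refine lintegral_mono fun q => ?_
    rw [← ENNReal.ofReal_mul (by positivity), ← ENNReal.ofReal_mul (by positivity),
      ← ENNReal.ofReal_add (by positivity) (by positivity)]
    refine ENNReal.ofReal_le_ofReal ?_
    obtain ⟨x, y, z⟩ := q
    obtain ⟨ha0, ha1⟩ := hα
    have hn : ‖x - ((1 - α) • y + α • z)‖ ≤ ‖x - y‖ + ‖x - z‖ := by
      have : x - ((1 - α) • y + α • z) = (1 - α) • (x - y) + α • (x - z) := by module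
      rw [this]
      refine (norm_add_le _ _).trans ?_
      rw [norm_smul, norm_smul, Real.norm_of_nonneg ha0,
        Real.norm_of_nonneg (sub_nonneg.2 ha1)]
      have := norm_nonneg (x - y)
      have := norm_nonneg (x - z)
      nlinarith
    calc ‖x - ((1 - α) • y + α • z)‖ ^ 2 ≤ (‖x - y‖ + ‖x - z‖) ^ 2 := by gcongr
      _ ≤ 2 * ‖x - y‖ ^ 2 + 2 * ‖x - z‖ ^ 2 := by
        nlinarith [sq_nonneg (‖x - y‖ - ‖x - z‖)]
  exact ne_top_of_le_ne_top (ENNReal.add_ne_top.2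
    ⟨ENNReal.mul_ne_top (by simp) hμ₂.2, ENNReal.mul_ne_top (by simp) hμ₃.2⟩) hle

/-- The Talagrand inequality for `F` itself: quadratic growth away from the minimizer. -/
lemma talagrand_of_min {μ₀ : Measure (Euc d)} {F : Measure (Euc d) → EReal} {lam : ℝ}
    (hμ₀ : IsProbabilityMeasure μ₀) (hlam : 0 ≤ lam) (hconv : GenGeoConvex μ₀ lam F)
    {μbar ν : Measure (Euc d)} (hμbar : μbar ∈ Pfin μ₀) (hmin : ∀ ρ ∈ Pfin μ₀, F μbar ≤ F ρ)
    (hν : ν ∈ Pfin μ₀) {m f : ℝ} (hm : F μbar = m) (hf : F ν = f) :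
    lam / 2 * W2 ν μbar ^ 2 ≤ f - m := by
  have h0 : μ₀ ∈ Pfin μ₀ := ⟨hμ₀, by simp [W2sq_self]⟩
  obtain ⟨pl, h2, h3, hc⟩ := hconv μ₀ h0 ν hν μbar hμbar
  have hle := W2sq_le_plan_cost h2 h3
  have hfin : ∫⁻ q, ENNReal.ofReal (‖q.2.1 - q.2.2‖ ^ 2) ∂pl ≠ ⊤ := by
    refine ne_top_of_le_ne_top ?_ (plan_cost_le h2 h3 one_pos)
    exact ENNReal.add_ne_top.2 ⟨ENNReal.mul_ne_top ENNReal.ofReal_ne_top hν.2,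
      ENNReal.mul_ne_top ENNReal.ofReal_ne_top hμbar.2⟩
  have hle' := ENNReal.toReal_mono hfin hle
  rw [← W2_sq] at hle'
  set C := (∫⁻ q, ENNReal.ofReal (‖q.2.1 - q.2.2‖ ^ 2) ∂pl).toReal
  have key : ∀ α ∈ Set.Ico (0 : ℝ) 1, α * (lam / 2 * C) ≤ f - m := by
    intro α hα
    have hα' : α ∈ Set.Icc (0 : ℝ) 1 := ⟨hα.1, hα.2.le⟩
    have h := (hmin _ (interp_mem_Pfin hμ₀ hν hμbar h2 h3 hα')).trans (hc α hα')
    rw [hm, hf] at h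
    have h' : m ≤ (1 - α) * f + α * m - α * (1 - α) * (lam / 2) * C := by exact_mod_cast h
    -- the inequality `h'` is `1 - α` times the claim
    have hpos : 0 < 1 - α := sub_pos.2 hα.2
    refine le_of_mul_le_mul_left ?_ hpos
    linarith
  have hlim : lam / 2 * C ≤ f - m := by
    have ht : Tendsto (fun α : ℝ => α * (lam / 2 * C)) (nhdsWithin 1 (Set.Iio 1))
        (nhds (1 * (lam / 2 * C))) :=
      (Continuous.tendsto (by fun_prop) 1).mono_left nhdsWithin_le_nhds
    rw [one_mul] at ht
    refine le_of_tendsto ht ?_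
    filter_upwards [Ico_mem_nhdsLT (zero_lt_one (α := ℝ))] with α hα using key α hα
  exact (mul_le_mul_of_nonneg_left hle' (by positivity)).trans hlim

end Transport

/-- **Talagrand inequality for the Moreau–Yosida regularization** (Theorem 1.2, first part).
Under the hypotheses of Theorem 1.1, with `λ_τ := λ/(1+λτ)`, for all `μ` in the
`W₂`-closure of `D(E)`: `E_τ(μ) - E_τ(μ̄) ≥ (λ_τ/2) W₂²(μ, μ̄)`. -/
theorem moreauYosida_talagrand
    {d : ℕ} (μ₀ : Measure (Euc d)) (hμ₀ : IsProbabilityMeasure μ₀)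
    (F : Measure (Euc d) → EReal) (lam : ℝ) (hlam : 0 ≤ lam)
    (hproper : ProperFn μ₀ F) (hcoer : CoerciveFn μ₀ F) (hlsc : W2LSC μ₀ F)
    (hconv : GenGeoConvex μ₀ lam F)
    (μbar : Measure (Euc d)) (hμbar : μbar ∈ Pfin μ₀)
    (hmin : ∀ ρ ∈ Pfin μ₀, F μbar ≤ F ρ)
    (τ : ℝ) (hτ : 0 < τ)
    (μ : Measure (Euc d)) (hμ : μ ∈ W2Closure μ₀ (Dom μ₀ F)) :
    ((((lam / (1 + lam * τ)) / 2) * (W2 μ μbar) ^ 2 : ℝ) : EReal) ≤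
      MY μ₀ F τ μ - MY μ₀ F τ μbar := by
  obtain ⟨hbot, ρ₀, hρ₀, hρ₀top⟩ := hproper
  obtain ⟨m, hm⟩ : ∃ m : ℝ, F μbar = m :=
    ⟨(F μbar).toReal,
      (EReal.coe_toReal (ne_top_of_le_ne_top hρ₀top (hmin _ hρ₀)) (hbot _)).symm⟩
  have hμ' : μ ∈ Pfin μ₀ := hμ.1
  have hbar : MY μ₀ F τ μbar ≤ m := by
    refine (iInf₂_le μbar hμbar).trans_eq ?_
    rw [W2_sq, W2sq_self, hm]
    simp
  have hlow : ((m + lam / (1 + lam * τ) / 2 * W2 μ μbar ^ 2 : ℝ) : EReal) ≤ MY μ₀ F τ μ := by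
    refine le_iInf₂ fun ν hν => ?_
    by_cases htop : F ν = ⊤
    · rw [htop, EReal.coe_add_top]; exact le_top
    obtain ⟨f, hf⟩ : ∃ f : ℝ, F ν = f :=
      ⟨(F ν).toReal, (EReal.coe_toReal htop (hbot _)).symm⟩
    rw [hf, ← EReal.coe_add, EReal.coe_le_coe_iff]
    have hT := talagrand_of_min hμ₀ hlam hconv hμbar hmin hν hm hf
    have hsym : W2 ν μ = W2 μ ν := by rw [W2, W2, W2sq_comm]
    rcases hlam.eq_or_lt with h0 | hpos
    · subst h0
      have : 0 ≤ W2 μ ν ^ 2 / (2 * τ) := by positivity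
      simp only [zero_div, zero_mul, add_zero] at hT ⊢
      linarith
    -- the weight that is optimal for the harmonic combination of `1/τ` and `lam`
    have htri := W2_sq_le hμ₀ hconv hμ' hν hμbar (s := (lam * τ)⁻¹) (by positivity)
    rw [hsym, inv_inv] at htri
    have h1 : lam / (1 + lam * τ) / 2 * W2 μ μbar ^ 2 ≤ lam / (1 + lam * τ) / 2 *
        ((1 + (lam * τ)⁻¹) * W2 μ ν ^ 2 + (1 + lam * τ) * W2 ν μbar ^ 2) := by gcongr
    have h2 : lam / (1 + lam * τ) / 2 *
        ((1 + (lam * τ)⁻¹) * W2 μ ν ^ 2 + (1 + lam * τ) * W2 ν μbar ^ 2)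
        = W2 μ ν ^ 2 / (2 * τ) + lam / 2 * W2 ν μbar ^ 2 := by
      have : 1 + lam * τ ≠ 0 := by positivity
      field_simp
      ring
    linarith
  calc ((((lam / (1 + lam * τ)) / 2) * (W2 μ μbar) ^ 2 : ℝ) : EReal)
      = ((m + lam / (1 + lam * τ) / 2 * W2 μ μbar ^ 2 : ℝ) : EReal) - (m : EReal) := by
        rw [← EReal.coe_sub, add_sub_cancel_left]
    _ ≤ MY μ₀ F τ μ - MY μ₀ F τ μbar := EReal.sub_le_sub hlow hbar
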